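/- Let l ≥ 1, let k_1, …, k_l be integers with k_i ≥ 2 for all i and k = Σ k_i, and let d_1, …, d_l be positive integers with d = Σ d_i. Partition the weight variables w = (w_1, …, w_l) ∈ ℝ^{k_1} × ⋯ × ℝ^{k_l} = ℝ^k into l blocks. Let y(w, x) be a real polynomial in (w, x) ∈ ℝ^k × ℝ^N such that every monomial of y has total degree at most d_i in the components of w_i, for each i. For each w ∈ ℝ^k let A_w = {x ∈ ℝ^N : y(w, x) ≥ 0}, and let 𝓐 = {A_w : w ∈ ℝ^k}. Define v = (k_1/k, …, k_l/k), u = (d_1/d, …, d_l/d), and H(v|u) = Σ_{i=1}^l (k_i/k)·lg(d·k_i/(k·d_i)). Then every finite subset of ℝ^N shattered by 𝓐 has cardinality at most 2k·(lg(4ed) − H(v|u)). -/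

import Mathlib

open MvPolynomial

/-!
Substituting the `n` points of a shattered set for the inputs, and adding a small constant, gives
polynomials `q j` in the weights that realise all `2 ^ n` strict sign patterns. In the region of
each sign pattern, the function `|∏ j, q j| * exp (-|w|² / 2 - ⟨b, w⟩)` has a maximum, which is a
solution of `∑ j, ∂ₜ q j / q j - w t = b t`; for generic `b` all these solutions are nondegenerate,
by Sard's theorem. With new variables `z j = 1 / q j` they become nondegenerate zeros of a square
polynomial system of degree at most `d i` in the `i`-th block of weights and at most `1` in the
block of the `z j`.

The number of nondegenerate zeros obeys the multihomogeneous Bézout bound, so that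
`2 ^ n * n! * ∏ i, (k i)! ≤ (k + n)! * ∏ i, d i ^ k i`. The Bézout bound itself is a count of
dimensions: if the polynomial `b a` vanishes at all the zeros except `p a`, the linear map
`(g a)ₐ ↦ ∑ a, b a * g a (f)` is injective on tuples of polynomials `g a` of degree at most `T`, as
is seen from the lowest-order terms at the zeros; compare the growth in `T` of the
dimensions of its source and target.

Finally, a single term of the multinomial expansion of `(1 + ∑ i, (√2 - 1) k i / k) ^ (k + n)`
bounds the quotient of factorials.
-/

section Differential

variable {R σ τ : Type*} [CommSemiring R]

/-- The differential at the point `q` of the polynomial function defined by a polynomial, as a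
linear form in the direction. It is bundled as a linear map in the polynomial as well. -/
noncomputable def differentialAt [Fintype σ] (q : σ → R) :
    MvPolynomial σ R →ₗ[R] (σ → R) →ₗ[R] R :=
  ∑ t, ((aeval q).toLinearMap ∘ₗ (pderiv t).toLinearMap).smulRight (LinearMap.proj t)

lemma differentialAt_apply [Fintype σ] (q : σ → R) (p : MvPolynomial σ R) (u : σ → R) :
    differentialAt q p u = ∑ t, eval q (pderiv t p) * u t := by
  simp [differentialAt, aeval_eq_eval]

lemma differentialAt_single [Fintype σ] [DecidableEq σ] (q : σ → R) (p : MvPolynomial σ R)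
    (t : σ) : differentialAt q p (Pi.single t 1) = eval q (pderiv t p) := by
  simp [differentialAt_apply, Pi.single_apply]

@[simp]
lemma differentialAt_C [Fintype σ] (q : σ → R) (a : R) : differentialAt q (C a) = 0 := by
  ext; simp [differentialAt_apply]

@[simp]
lemma differentialAt_X [Fintype σ] (q : σ → R) (s : σ) :
    differentialAt q (X s) = LinearMap.proj s := by
  classical
  refine LinearMap.ext fun u => ?_
  simp [differentialAt_apply, pderiv_X, Pi.single_apply, apply_ite]

lemma differentialAt_mul [Fintype σ] (q : σ → R) (p p' : MvPolynomial σ R) :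
    differentialAt q (p * p') =
      eval q p • differentialAt q p' + eval q p' • differentialAt q p := by
  ext
  simp [differentialAt_apply, add_mul, Finset.sum_add_distrib, Finset.mul_sum, mul_assoc]

lemma differentialAt_rename [Fintype σ] [Fintype τ] (f : σ → τ) (q u : τ → R)
    (p : MvPolynomial σ R) :
    differentialAt q (rename f p) u = differentialAt (q ∘ f) p (u ∘ f) := by
  induction p using MvPolynomial.induction_on with
  | C a => simp
  | add p p' h h' => simp [h, h']
  | mul_X p i h => simp [differentialAt_mul, h, eval_rename]

/-- The restriction of a polynomial to the parametrised line `t ↦ q + t u`. -/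
noncomputable def restrictLine (q u : σ → R) : MvPolynomial σ R →ₐ[R] Polynomial R :=
  aeval fun s => Polynomial.C (q s) + Polynomial.C (u s) * Polynomial.X

lemma restrictLine_X (q u : σ → R) (s : σ) :
    restrictLine q u (X s) = Polynomial.C (q s) + Polynomial.C (u s) * Polynomial.X :=
  aeval_X _ s

lemma eval_zero_aeval (h : σ → Polynomial R) (g : MvPolynomial σ R) :
    (aeval h g).eval 0 = eval (fun s => (h s).eval 0) g := by
  induction g using MvPolynomial.induction_on with
  | C a => simp
  | add p p' h h' => simp [h, h']
  | mul_X p i h => simp [h]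

lemma eval_zero_restrictLine (q u : σ → R) (p : MvPolynomial σ R) :
    (restrictLine q u p).eval 0 = eval q p := by
  simp [restrictLine, eval_zero_aeval]

lemma coeff_one_restrictLine [Fintype σ] (q u : σ → R) (p : MvPolynomial σ R) :
    (restrictLine q u p).coeff 1 = differentialAt q p u := by
  induction p using MvPolynomial.induction_on with
  | C a => simp [restrictLine]
  | add p p' h h' => simp [h, h']
  | mul_X p i h =>
    have h0 : (restrictLine q u p).coeff 0 = eval q p := by
      rw [Polynomial.coeff_zero_eq_eval_zero, eval_zero_restrictLine]
    simp [Polynomial.mul_coeff_one, restrictLine_X, differentialAt_mul, h, h0,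
      mul_comm _ (q i)]

lemma aeval_X_mul_of_isHomogeneous {m : ℕ} {g : MvPolynomial σ R} (hg : g.IsHomogeneous m)
    (h : σ → Polynomial R) :
    aeval (fun s => Polynomial.X * h s) g = Polynomial.X ^ m * aeval h g := by
  simp only [aeval_def, eval₂_eq, Finset.mul_sum]
  refine Finset.sum_congr rfl fun a ha => ?_
  have hdeg : ∑ s ∈ a.support, a s = m := by
    simpa [Finsupp.weight_apply, Finsupp.sum] using hg (mem_support_iff.1 ha)
  simp only [mul_pow, Finset.prod_mul_distrib, Finset.prod_pow_eq_pow_sum, hdeg]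
  ring

lemma exists_aeval_X_mul_eq_X_pow_mul {m : ℕ} {g : MvPolynomial σ R}
    (hg : ∀ j < m, homogeneousComponent j g = 0) (h : σ → Polynomial R) :
    ∃ r, aeval (fun s => Polynomial.X * h s) g = Polynomial.X ^ m * r ∧
      r.eval 0 = eval (fun s => (h s).eval 0) (homogeneousComponent m g) := by
  refine ⟨∑ j ∈ Finset.range (g.totalDegree + 1),
    Polynomial.X ^ (j - m) * aeval h (homogeneousComponent j g), ?_, ?_⟩
  · conv_lhs => rw [← sum_homogeneousComponent g]
    rw [map_sum, Finset.mul_sum]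
    refine Finset.sum_congr rfl fun j _ => ?_
    rcases lt_or_ge j m with hj | hj
    · simp [hg j hj]
    · rw [aeval_X_mul_of_isHomogeneous (homogeneousComponent_isHomogeneous j g), ← mul_assoc,
        ← pow_add, Nat.add_sub_cancel' hj]
  · rw [Polynomial.eval_finsetSum, Finset.sum_eq_single m, ← eval_zero_aeval]
    · simp
    · intro j _ hj
      rcases hj.lt_or_gt with hj | hj
      · simp [hg j hj]
      · simp [(Nat.sub_pos_of_lt hj).ne']
    · intro hm
      rw [homogeneousComponent_eq_zero m g (by simpa using hm)]
      simp

end Differential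

section NondegenerateZeros

variable {𝕜 σ α : Type*} [Field 𝕜] [Fintype σ]

/-- A common zero of a square polynomial system at which the Jacobian is injective, hence
invertible. -/
structure IsNondegenerateZero (f : σ → MvPolynomial σ 𝕜) (p : σ → 𝕜) : Prop where
  eval_eq_zero : ∀ s, eval p (f s) = 0
  injective : Function.Injective (LinearMap.pi fun s => differentialAt p (f s))

lemma IsNondegenerateZero.exists_restrictLine_aeval_eq {f : σ → MvPolynomial σ 𝕜} {p : σ → 𝕜}
    (hp : IsNondegenerateZero f p) (u : σ → 𝕜) {m : ℕ} {g : MvPolynomial σ 𝕜}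
    (hg : ∀ j < m, homogeneousComponent j g = 0) :
    ∃ r, restrictLine p u (aeval f g) = Polynomial.X ^ m * r ∧
      r.eval 0 = eval (fun s => differentialAt p (f s) u) (homogeneousComponent m g) := by
  have hdvd (s : σ) : Polynomial.X ∣ restrictLine p u (f s) := by
    rw [Polynomial.X_dvd_iff, Polynomial.coeff_zero_eq_eval_zero, eval_zero_restrictLine,
      hp.eval_eq_zero s]
  choose h hh using hdvd
  have hlin (s : σ) : (h s).eval 0 = differentialAt p (f s) u := by
    rw [← coeff_one_restrictLine, hh, Polynomial.coeff_X_mul, Polynomial.coeff_zero_eq_eval_zero]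
  have hcomp : (restrictLine p u).comp (aeval f) = aeval fun s => Polynomial.X * h s := by
    ext1 s
    simp [hh]
  obtain ⟨r, hr, hr0⟩ := exists_aeval_X_mul_eq_X_pow_mul hg h
  exact ⟨r, (DFunLike.congr_fun hcomp g).trans hr, by simpa only [hlin] using hr0⟩

/- Compare lowest-order terms: along a line through the nondegenerate zero `p a` only the summand
of `a` contributes in order `m`, and it contributes its degree-`m` component evaluated at an
arbitrary vector. -/
lemma homogeneousComponent_eq_zero_of_sum_mul_aeval_eq_zero [Infinite 𝕜] [Fintype α]
    {f : σ → MvPolynomial σ 𝕜} {p : α → σ → 𝕜} (hp : ∀ a, IsNondegenerateZero f (p a))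
    {b : α → MvPolynomial σ 𝕜} (hb : Pairwise fun a a' => eval (p a) (b a') = 0)
    (hb_self : ∀ a, eval (p a) (b a) ≠ 0)
    {g : α → MvPolynomial σ 𝕜} (hsum : ∑ a, b a * aeval f (g a) = 0) {m : ℕ}
    (hlow : ∀ a, ∀ j < m, homogeneousComponent j (g a) = 0) (a : α) :
    homogeneousComponent m (g a) = 0 := by
  refine MvPolynomial.funext fun v => ?_
  obtain ⟨u, rfl⟩ := LinearMap.injective_iff_surjective.1 (hp a).injective v
  choose r hr hr0 using fun a' => (hp a).exists_restrictLine_aeval_eq u (hlow a')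
  have hcancel : ∑ a', restrictLine (p a) u (b a') * r a' = 0 := by
    refine (mul_eq_zero.1 ?_).resolve_left (pow_ne_zero m Polynomial.X_ne_zero)
    calc Polynomial.X ^ m * ∑ a', restrictLine (p a) u (b a') * r a'
        = restrictLine (p a) u (∑ a', b a' * aeval f (g a')) := by
          simp only [map_sum, map_mul, hr, Finset.mul_sum, mul_left_comm]
      _ = 0 := by rw [hsum, map_zero]
  have hzero : ∑ a', eval (p a) (b a') * (r a').eval 0 = 0 := by
    simpa [Polynomial.eval_finsetSum, eval_zero_restrictLine] using
      congrArg (Polynomial.eval 0) hcancel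
  rw [Finset.sum_eq_single a (fun a' _ ha' => by rw [hb ha'.symm, zero_mul]) (by simp)] at hzero
  rw [map_zero, ← (mul_eq_zero.1 hzero).resolve_left (hb_self a), hr0]
  rfl

lemma eq_zero_of_sum_mul_aeval_eq_zero [Infinite 𝕜] [Fintype α]
    {f : σ → MvPolynomial σ 𝕜} {p : α → σ → 𝕜} (hp : ∀ a, IsNondegenerateZero f (p a))
    {b : α → MvPolynomial σ 𝕜} (hb : Pairwise fun a a' => eval (p a) (b a') = 0)
    (hb_self : ∀ a, eval (p a) (b a) ≠ 0)
    {g : α → MvPolynomial σ 𝕜} (hsum : ∑ a, b a * aeval f (g a) = 0) : g = 0 := by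
  have hcomp (m : ℕ) : ∀ a, homogeneousComponent m (g a) = 0 := by
    induction m using Nat.strong_induction_on with
    | _ m ih =>
      exact homogeneousComponent_eq_zero_of_sum_mul_aeval_eq_zero hp hb hb_self hsum
        fun a j hj => ih j hj a
  funext a
  rw [← sum_homogeneousComponent (g a), Finset.sum_eq_zero fun m _ => hcomp m a, Pi.zero_apply]

end NondegenerateZeros

section Interpolation

variable {R σ α : Type*} [CommRing R] [IsDomain R]

lemma exists_pairwise_eval_eq_zero [Finite α] {p : α → σ → R} (hp : Function.Injective p) :
    ∃ b : α → MvPolynomial σ R,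
      (Pairwise fun a a' => eval (p a) (b a') = 0) ∧ ∀ a, eval (p a) (b a) ≠ 0 := by
  classical
  have := Fintype.ofFinite α
  have hsep (a a' : α) (h : a ≠ a') : ∃ f, eval (p a) f = 0 ∧ eval (p a') f ≠ 0 := by
    obtain ⟨s, hs⟩ := Function.ne_iff.1 (hp.ne h)
    exact ⟨X s - C (p a s), by simp, by simpa using sub_ne_zero.2 hs.symm⟩
  choose! f hf_zero hf_ne using hsep
  refine ⟨fun a => ∏ a' ∈ Finset.univ.erase a, f a' a, fun a a' h => ?_, fun a => ?_⟩
  · simp only [map_prod]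
    exact Finset.prod_eq_zero (Finset.mem_erase.2 ⟨h, Finset.mem_univ a⟩) (hf_zero a a' h)
  · rw [map_prod, Finset.prod_ne_zero_iff]
    exact fun a' ha' => hf_ne a' a (Finset.ne_of_mem_erase ha')

end Interpolation

section BlockDegree

variable {R σ τ ι : Type*} [CommSemiring R]

/-- The polynomials of degree at most `M i` in the block `π ⁻¹ {i}` of variables, for every `i`.
The partition of the variables into blocks is encoded by the map `π` from variables to blocks, so
that `m.mapDomain π` is the multidegree of the monomial `m`. -/
noncomputable def blockDegreeLE (R : Type*) [CommSemiring R] (π : σ → ι) (M : ι → ℕ) :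
    Submodule R (MvPolynomial σ R) :=
  restrictSupport R {m | ⇑(m.mapDomain π) ≤ M}

lemma mem_blockDegreeLE {π : σ → ι} {M : ι → ℕ} {p : MvPolynomial σ R} :
    p ∈ blockDegreeLE R π M ↔ ∀ m ∈ p.support, ⇑(m.mapDomain π) ≤ M :=
  Iff.rfl

lemma monomial_mem_blockDegreeLE {π : σ → ι} {M : ι → ℕ} {m : σ →₀ ℕ}
    (hm : ⇑(m.mapDomain π) ≤ M) (a : R) : monomial m a ∈ blockDegreeLE R π M :=
  (monomial_mem_restrictSupport R).2 (Or.inl hm)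

@[gcongr]
lemma blockDegreeLE_mono {π : σ → ι} {M M' : ι → ℕ} (h : M ≤ M') :
    blockDegreeLE R π M ≤ blockDegreeLE R π M' :=
  restrictSupport_mono R fun _ hm => le_trans hm h

lemma C_mem_blockDegreeLE (π : σ → ι) (M : ι → ℕ) (a : R) : C a ∈ blockDegreeLE R π M :=
  monomial_mem_blockDegreeLE (by simp) a

lemma one_mem_blockDegreeLE (π : σ → ι) (M : ι → ℕ) : 1 ∈ blockDegreeLE R π M :=
  C_mem_blockDegreeLE π M 1

lemma X_mem_blockDegreeLE [DecidableEq ι] {π : σ → ι} (s : σ) :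
    X s ∈ blockDegreeLE R π (Pi.single (π s) 1) :=
  monomial_mem_blockDegreeLE (by simp [Finsupp.single_eq_pi_single]) 1

lemma mul_mem_blockDegreeLE {π : σ → ι} {M M' : ι → ℕ} {p p' : MvPolynomial σ R}
    (hp : p ∈ blockDegreeLE R π M) (hp' : p' ∈ blockDegreeLE R π M') :
    p * p' ∈ blockDegreeLE R π (M + M') := by
  classical
  intro m hm
  obtain ⟨a, ha, a', ha', rfl⟩ := Finset.mem_add.1 (support_mul p p' hm)
  simpa [Finsupp.mapDomain_add] using add_le_add (hp ha) (hp' ha')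

lemma pow_mem_blockDegreeLE {π : σ → ι} {M : ι → ℕ} {p : MvPolynomial σ R}
    (hp : p ∈ blockDegreeLE R π M) (n : ℕ) : p ^ n ∈ blockDegreeLE R π (n • M) := by
  induction n with
  | zero => simpa using one_mem_blockDegreeLE π 0
  | succ n ih => simpa only [pow_succ, succ_nsmul] using mul_mem_blockDegreeLE ih hp

lemma prod_mem_blockDegreeLE {α : Type*} {π : σ → ι} {M : α → ι → ℕ}
    {p : α → MvPolynomial σ R} (s : Finset α) (hp : ∀ a ∈ s, p a ∈ blockDegreeLE R π (M a)) :
    ∏ a ∈ s, p a ∈ blockDegreeLE R π (∑ a ∈ s, M a) := by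
  classical
  induction s using Finset.induction_on with
  | empty => simpa using one_mem_blockDegreeLE π 0
  | insert a s ha ih =>
    rw [Finset.prod_insert ha, Finset.sum_insert ha]
    rw [Finset.forall_mem_insert] at hp
    exact mul_mem_blockDegreeLE hp.1 (ih hp.2)

lemma aeval_mem_blockDegreeLE {π : τ → ι} {δ : σ → ι → ℕ} {M : ι → ℕ}
    {f : σ → MvPolynomial τ R} (hf : ∀ s, f s ∈ blockDegreeLE R π (δ s)) {g : MvPolynomial σ R}
    (hg : ∀ m ∈ g.support, (m.sum fun s n => n • δ s) ≤ M) :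
    aeval f g ∈ blockDegreeLE R π M := by
  rw [aeval_def, eval₂_eq]
  refine Submodule.sum_mem _ fun m hm => ?_
  rw [algebraMap_eq, ← smul_eq_C_mul]
  exact Submodule.smul_mem _ _ (blockDegreeLE_mono (hg m hm)
    (prod_mem_blockDegreeLE _ fun s _ => pow_mem_blockDegreeLE (hf s) _))

lemma pderiv_mem_blockDegreeLE {π : σ → ι} {M : ι → ℕ} {p : MvPolynomial σ R}
    (hp : p ∈ blockDegreeLE R π M) (t : σ) : pderiv t p ∈ blockDegreeLE R π M := by
  rw [p.as_sum, map_sum]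
  refine Submodule.sum_mem _ fun m hm => ?_
  rw [pderiv_monomial]
  exact monomial_mem_blockDegreeLE
    (le_trans (Finsupp.mapDomain_mono tsub_le_self) (hp hm)) _

lemma mem_blockDegreeLE_totalDegree (π : σ → ι) (p : MvPolynomial σ R) :
    p ∈ blockDegreeLE R π fun _ => p.totalDegree := by
  intro m hm i
  calc m.mapDomain π i ≤ (m.mapDomain π).degree := Finsupp.le_degree i _
    _ = m.degree := Finsupp.degree_mapDomain π m
    _ ≤ p.totalDegree := le_totalDegree hm

/-- The number of variables in the block `i`. -/
noncomputable def blockSize (π : σ → ι) (i : ι) : ℕ :=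
  Nat.card {s // π s = i}

lemma sum_blockSize [Fintype σ] [Fintype ι] (π : σ → ι) :
    ∑ i, blockSize π i = Fintype.card σ := by
  simp only [blockSize]
  rw [← Nat.card_sigma, Nat.card_congr (Equiv.sigmaFiberEquiv π), Nat.card_eq_fintype_card]

lemma blockSize_sigma_fst {k : ι → ℕ} (i : ι) :
    blockSize (Sigma.fst : ((i : ι) × Fin (k i)) → ι) i = k i := by
  rw [blockSize, Nat.card_congr (Equiv.sigmaSubtype i), Nat.card_eq_fintype_card,
    Fintype.card_fin]

lemma natCard_sum_le (F : Type*) [Fintype F] (T : ℕ) :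
    Nat.card {a : F → ℕ // ∑ s, a s ≤ T} = (T + Fintype.card F).choose (Fintype.card F) := by
  classical
  let slack : {a : F → ℕ // ∑ s, a s ≤ T} ≃ {P : Option F → ℕ // ∑ i, P i = T} :=
    { toFun a := ⟨fun o => o.elim (T - ∑ s, a.1 s) a.1, by
        simpa [Fintype.sum_option] using Nat.sub_add_cancel a.2⟩
      invFun P := ⟨fun s => P.1 (some s), by
        have hP := P.2
        rw [Fintype.sum_option] at hP
        exact le_of_add_le_right hP.le⟩
      left_inv a := rfl
      right_inv P := by
        ext (_ | s)
        · simp [← P.2, Fintype.sum_option]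
        · rfl }
  rw [Nat.card_congr (slack.trans (Sym.equivNatSumOfFintype (Option F) T).symm),
    Nat.card_eq_fintype_card, Sym.card_sym_eq_choose, Fintype.card_option, add_right_comm,
    Nat.add_sub_cancel, add_comm, Nat.choose_symm_add]

/-- Sorting the exponents of a monomial by blocks. -/
noncomputable def exponentsEquivPi [Finite σ] (π : σ → ι) :
    (σ →₀ ℕ) ≃ (∀ i, {s // π s = i} → ℕ) :=
  Finsupp.equivFunOnFinite.trans
    (((Equiv.sigmaFiberEquiv π).symm.arrowCongr (Equiv.refl ℕ)).trans (Equiv.piCurry fun _ _ => ℕ))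

lemma sum_exponentsEquivPi [Fintype σ] [DecidableEq ι] (π : σ → ι) (m : σ →₀ ℕ) (i : ι) :
    ∑ s, exponentsEquivPi π m i s = m.mapDomain π i := by
  calc ∑ s, exponentsEquivPi π m i s = ∑ s : {s // π s = i}, m s := rfl
    _ = ∑ s with π s = i, m s := (Finset.sum_subtype _ (by simp) m).symm
    _ = m.mapDomain π i := by
      simp [Finsupp.mapDomain, Finsupp.sum_fintype, Finsupp.single_apply, Finset.sum_filter]

/-- Sorting by blocks the exponents of the monomials that span `blockDegreeLE R π M`. -/
noncomputable def boundedExponentsEquivPi [Fintype σ] [DecidableEq ι] (π : σ → ι) (M : ι → ℕ) :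
    {m : σ →₀ ℕ | ⇑(m.mapDomain π) ≤ M} ≃ ∀ i, {a : {s // π s = i} → ℕ // ∑ s, a s ≤ M i} :=
  ((exponentsEquivPi π).subtypeEquiv fun m => by
    simp only [sum_exponentsEquivPi, Set.mem_ofPred_eq, Pi.le_def]).trans Equiv.subtypePiEquivPi

lemma finrank_blockDegreeLE [Nontrivial R] [Finite σ] [Fintype ι] (π : σ → ι) (M : ι → ℕ) :
    Module.finrank R (blockDegreeLE R π M) =
      ∏ i, (M i + blockSize π i).choose (blockSize π i) := by
  classical
  have := Fintype.ofFinite σ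
  rw [blockDegreeLE, Module.finrank_eq_nat_card_basis (basisRestrictSupport R _),
    Nat.card_congr (boundedExponentsEquivPi π M), Nat.card_pi]
  simp only [natCard_sum_le, blockSize, Nat.card_eq_fintype_card]

lemma finite_blockDegreeLE [Nontrivial R] [Finite σ] [Finite ι] (π : σ → ι) (M : ι → ℕ) :
    Module.Finite R (blockDegreeLE R π M) := by
  have := Fintype.ofFinite ι
  have : Module.Free R (blockDegreeLE R π M) := .of_basis (basisRestrictSupport R _)
  refine Module.finite_of_finrank_pos ?_
  rw [finrank_blockDegreeLE]
  exact Finset.prod_pos fun i _ => Nat.choose_pos (Nat.le_add_left _ _)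

end BlockDegree

section Bezout

open scoped Nat
open Filter Topology

variable {𝕜 σ ι α : Type*} [Field 𝕜] [Infinite 𝕜] [Fintype σ] [Fintype ι] [Fintype α]

/- The map `(g a)ₐ ↦ ∑ a, b a * g a (f)` from tuples of polynomials of degree at most `T` is
injective, where `b` separates the points `p a`. -/
lemma exists_card_mul_choose_le {π : σ → ι} {d : ι → ℕ} {f : σ → MvPolynomial σ 𝕜}
    (hf : ∀ s, f s ∈ blockDegreeLE 𝕜 π d) {p : α → σ → 𝕜} (hp_inj : Function.Injective p)
    (hp : ∀ a, IsNondegenerateZero f (p a)) :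
    ∃ c, ∀ T, Fintype.card α * (T + Fintype.card σ).choose (Fintype.card σ) ≤
      ∏ i, (d i * T + c + blockSize π i).choose (blockSize π i) := by
  classical
  obtain ⟨b, hb, hb_self⟩ := exists_pairwise_eval_eq_zero hp_inj
  refine ⟨∑ a, (b a).totalDegree, fun T => ?_⟩
  set M : ι → ℕ := fun i => d i * T + ∑ a, (b a).totalDegree
  let V := blockDegreeLE 𝕜 (fun _ : σ => ()) fun _ => T
  have hmem (a : α) (g : V) : b a * aeval f g.1 ∈ blockDegreeLE 𝕜 π M := by
    have hb_mem : b a ∈ blockDegreeLE 𝕜 π fun _ => ∑ a, (b a).totalDegree :=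
      blockDegreeLE_mono (fun _ => Finset.single_le_sum (f := fun a => (b a).totalDegree)
        (fun _ _ => Nat.zero_le _) (Finset.mem_univ a)) (mem_blockDegreeLE_totalDegree π (b a))
    have hg_mem : aeval f g.1 ∈ blockDegreeLE 𝕜 π (T • d) := by
      refine aeval_mem_blockDegreeLE hf fun m hm => ?_
      have hdeg : m.degree ≤ T := by
        simpa [← Finsupp.degree_mapDomain (fun _ : σ => ()) m, Finsupp.degree_eq_sum] using
          g.2 hm ()
      rw [Finsupp.sum, ← Finset.sum_smul]
      exact nsmul_le_nsmul_left zero_le hdeg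
    refine blockDegreeLE_mono (le_of_eq ?_) (mul_mem_blockDegreeLE hb_mem hg_mem)
    ext i
    simp [M, mul_comm, add_comm]
  let Φ : (α → V) →ₗ[𝕜] blockDegreeLE 𝕜 π M := LinearMap.codRestrict _
    (∑ a, LinearMap.mulLeft 𝕜 (b a) ∘ₗ (aeval f).toLinearMap ∘ₗ V.subtype ∘ₗ LinearMap.proj a)
    fun g => by simpa using Submodule.sum_mem _ fun a _ => hmem a (g a)
  have hΦ : Function.Injective Φ := by
    refine (injective_iff_map_eq_zero Φ).2 fun g hg => ?_
    have hsum : ∑ a, b a * aeval f (g a).1 = 0 := by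
      simpa [Φ] using congrArg Subtype.val hg
    have := eq_zero_of_sum_mul_aeval_eq_zero hp hb hb_self hsum
    funext a
    exact Subtype.ext (congrFun this a)
  have := finite_blockDegreeLE (R := 𝕜) π M
  have := finite_blockDegreeLE (R := 𝕜) (fun _ : σ => ()) fun _ => T
  have hle := LinearMap.finrank_le_finrank_of_injective hΦ
  simpa [V, Module.finrank_pi_fintype, finrank_blockDegreeLE, blockSize] using hle

lemma tendsto_factorial_mul_choose_div_pow (a b k : ℕ) :
    Tendsto (fun T : ℕ => ((k ! * (a * T + b + k).choose k : ℕ) : ℝ) / T ^ k) atTop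
      (𝓝 (a ^ k)) := by
  have hlinear (j : ℕ) :
      Tendsto (fun T : ℕ => ((a * T + b + 1 + j : ℕ) : ℝ) / T) atTop (𝓝 a) := by
    have : Tendsto (fun T : ℕ => (a : ℝ) + ((b + 1 + j : ℕ) : ℝ) / T) atTop (𝓝 (a + 0)) :=
      tendsto_const_nhds.add (tendsto_const_div_atTop_nhds_zero_nat _)
    rw [add_zero] at this
    refine this.congr' ?_
    filter_upwards [eventually_ne_atTop 0] with T hT
    field_simp
    push_cast
    ring
  have hprod := tendsto_finsetProd (Finset.range k) fun j _ => hlinear j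
  rw [Finset.prod_const, Finset.card_range] at hprod
  refine hprod.congr fun T => ?_
  rw [← Nat.ascFactorial_eq_factorial_mul_choose, Nat.ascFactorial_eq_prod_range,
    Finset.prod_div_distrib, Finset.prod_const, Finset.card_range, Nat.cast_prod]

/-- The multihomogeneous Bézout inequality. -/
theorem card_mul_prod_factorial_le_of_isNondegenerateZero {π : σ → ι} {d : ι → ℕ}
    {f : σ → MvPolynomial σ 𝕜} (hf : ∀ s, f s ∈ blockDegreeLE 𝕜 π d) {p : α → σ → 𝕜}
    (hp_inj : Function.Injective p) (hp : ∀ a, IsNondegenerateZero f (p a)) :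
    Fintype.card α * ∏ i, (blockSize π i)! ≤
      (Fintype.card σ)! * ∏ i, d i ^ blockSize π i := by
  obtain ⟨c, hc⟩ := exists_card_mul_choose_le hf hp_inj hp
  set n := Fintype.card σ with hn
  have hle (T : ℕ) :
      (Fintype.card α * ∏ i, (blockSize π i)!) *
          (((n ! * (1 * T + 0 + n).choose n : ℕ) : ℝ) / T ^ n) ≤
        n ! * ∏ i, (((blockSize π i)! *
          (d i * T + c + blockSize π i).choose (blockSize π i) : ℕ) : ℝ) / T ^ blockSize π i := by
    rw [Finset.prod_div_distrib, Finset.prod_pow_eq_pow_sum, sum_blockSize, ← hn,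
      ← mul_div_assoc, ← mul_div_assoc]
    gcongr ?_ / _
    rw [one_mul, add_zero]
    norm_cast
    rw [Finset.prod_mul_distrib]
    calc _ = n ! * (∏ i, (blockSize π i)!) * (Fintype.card α * (T + n).choose n) := by ring
      _ ≤ n ! * (∏ i, (blockSize π i)!) * _ := Nat.mul_le_mul_left _ (hc T)
      _ = _ := by ring
  have hlim := le_of_tendsto_of_tendsto'
    ((tendsto_factorial_mul_choose_div_pow 1 0 n).const_mul _)
    ((tendsto_finsetProd Finset.univ fun i _ =>
      tendsto_factorial_mul_choose_div_pow (d i) c (blockSize π i)).const_mul _) hle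
  rw [Nat.cast_one, one_pow, mul_one] at hlim
  exact_mod_cast hlim

end Bezout

section LogGradient

variable {𝕜 σ J : Type*} [Field 𝕜] [Fintype J]

/-- The gradient at `w` of `∑ j, log |q j| - ∑ t, X t ^ 2 / 2`, in its algebraic form. -/
noncomputable def logGradient (q : J → MvPolynomial σ 𝕜) (w : σ → 𝕜) : σ → 𝕜 :=
  fun t => ∑ j, (eval w (q j))⁻¹ * eval w (pderiv t (q j)) - w t

/-- The differential of `logGradient q` at `w`, in its algebraic form. -/
noncomputable def logHessian [Fintype σ] (q : J → MvPolynomial σ 𝕜) (w : σ → 𝕜) :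
    (σ → 𝕜) →ₗ[𝕜] σ → 𝕜 :=
  LinearMap.pi fun t =>
    ∑ j, ((eval w (q j))⁻¹ • differentialAt w (pderiv t (q j)) -
      ((eval w (q j) ^ 2)⁻¹ * eval w (pderiv t (q j))) • differentialAt w (q j)) -
    LinearMap.proj t

end LogGradient

section CriticalPoints

open Filter Topology

variable {σ J : Type*} [Fintype σ]

lemma hasFDerivAt_eval (p : MvPolynomial σ ℝ) (w : σ → ℝ) :
    HasFDerivAt (fun w => eval w p) (differentialAt w p).toContinuousLinearMap w := by
  induction p using MvPolynomial.induction_on with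
  | C a => simpa using hasFDerivAt_const a w
  | add p p' h h' => simpa using h.fun_add h'
  | mul_X p i h =>
    simp only [map_mul, eval_X, differentialAt_mul, differentialAt_X, map_add, map_smul]
    exact h.fun_mul (hasFDerivAt_apply i w)

lemma hasFDerivAt_logGradient [Fintype J] (q : J → MvPolynomial σ ℝ) {w : σ → ℝ}
    (hw : ∀ j, eval w (q j) ≠ 0) :
    HasFDerivAt (logGradient q) (logHessian q w).toContinuousLinearMap w := by
  refine hasFDerivAt_pi'.2 fun t => ?_
  have hsummand (j : J) := (((hasDerivAt_inv (hw j)).comp_hasFDerivAt w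
    (hasFDerivAt_eval (q j) w)).mul (hasFDerivAt_eval (pderiv t (q j)) w))
  refine ((HasFDerivAt.fun_sum fun j _ => hsummand j).sub
    (hasFDerivAt_apply t w)).congr_fderiv ?_
  ext u
  simp [logHessian, sub_eq_add_neg, mul_assoc, mul_left_comm]

lemma exists_forall_abs_eval_le_exp (p : MvPolynomial σ ℝ) :
    ∃ a, 0 ≤ a ∧ ∀ w, |eval w p| ≤ Real.exp (a * (1 + ‖w‖)) := by
  induction p using MvPolynomial.induction_on with
  | C a =>
    refine ⟨|a|, abs_nonneg a, fun w => ?_⟩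
    calc |eval w (C a)| = |a| * 1 := by rw [eval_C, mul_one]
      _ ≤ |a| * (1 + ‖w‖) := by gcongr; exact le_add_of_nonneg_right (norm_nonneg w)
      _ ≤ Real.exp (|a| * (1 + ‖w‖)) := (le_add_of_nonneg_right zero_le_one).trans
        (Real.add_one_le_exp _)
  | add p p' h h' =>
    obtain ⟨a, ha, h⟩ := h
    obtain ⟨a', -, h'⟩ := h'
    refine ⟨max a a' + 1, by positivity, fun w => ?_⟩
    have htwo : (2 : ℝ) ≤ Real.exp (1 + ‖w‖) := by
      linarith [Real.add_one_le_exp (1 + ‖w‖), norm_nonneg w]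
    calc |eval w (p + p')| ≤ |eval w p| + |eval w p'| := by rw [map_add]; exact abs_add_le _ _
      _ ≤ Real.exp (max a a' * (1 + ‖w‖)) + Real.exp (max a a' * (1 + ‖w‖)) := by
        gcongr
        · exact (h w).trans (by gcongr; exact le_max_left a a')
        · exact (h' w).trans (by gcongr; exact le_max_right a a')
      _ = Real.exp (max a a' * (1 + ‖w‖)) * 2 := by ring
      _ ≤ Real.exp (max a a' * (1 + ‖w‖)) * Real.exp (1 + ‖w‖) := by gcongr
      _ = Real.exp ((max a a' + 1) * (1 + ‖w‖)) := by rw [← Real.exp_add]; ring_nf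
  | mul_X p i h =>
    obtain ⟨a, ha, h⟩ := h
    refine ⟨a + 1, by positivity, fun w => ?_⟩
    have hX : |w i| ≤ Real.exp (1 + ‖w‖) := by
      have hwi : |w i| ≤ ‖w‖ := norm_le_pi_norm w i
      linarith [Real.add_one_le_exp (1 + ‖w‖)]
    rw [map_mul, eval_X, abs_mul, add_mul, one_mul, Real.exp_add]
    gcongr
    exact h w

/-- The quadratic function `|w|² / 2 + ⟨b, w⟩`. -/
noncomputable def tiltedQuadratic (b w : σ → ℝ) : ℝ :=
  ∑ t, (w t ^ 2 / 2 + b t * w t)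

lemma le_tiltedQuadratic (b w : σ → ℝ) :
    ‖w‖ ^ 2 / 2 - (∑ t, |b t|) * ‖w‖ ≤ tiltedQuadratic b w := by
  have hquad : ‖w‖ ^ 2 ≤ ∑ t, w t ^ 2 := by
    refine (Real.le_sqrt (norm_nonneg w) (Finset.sum_nonneg fun _ _ => sq_nonneg _)).1 ?_
    refine (pi_norm_le_iff_of_nonneg (Real.sqrt_nonneg _)).2 fun t => Real.abs_le_sqrt ?_
    exact Finset.single_le_sum (f := fun t => w t ^ 2) (fun _ _ => sq_nonneg _) (Finset.mem_univ t)
  have hlin : -((∑ t, |b t|) * ‖w‖) ≤ ∑ t, b t * w t := by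
    rw [Finset.sum_mul, ← Finset.sum_neg_distrib]
    refine Finset.sum_le_sum fun t _ => neg_le_of_abs_le ?_
    rw [abs_mul]
    gcongr
    exact norm_le_pi_norm w t
  rw [tiltedQuadratic, Finset.sum_add_distrib, ← Finset.sum_div]
  linarith

lemma hasFDerivAt_tiltedQuadratic (b w : σ → ℝ) :
    HasFDerivAt (tiltedQuadratic b)
      (∑ t, (w t + b t) • ContinuousLinearMap.proj (R := ℝ) (φ := fun _ : σ => ℝ) t) w := by
  refine HasFDerivAt.fun_sum fun t _ => ?_
  have hderiv : HasDerivAt (fun x : ℝ => x ^ 2 / 2 + b t * x) (w t + b t) (w t) := by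
    simpa using ((hasDerivAt_pow 2 (w t)).div_const 2).fun_add
      ((hasDerivAt_id (w t)).const_mul (b t))
  exact hderiv.comp_hasFDerivAt w (ContinuousLinearMap.proj t : (σ → ℝ) →L[ℝ] ℝ).hasFDerivAt

lemma tendsto_abs_eval_mul_exp_neg_tiltedQuadratic (p : MvPolynomial σ ℝ) (b : σ → ℝ) :
    Tendsto (fun w => |eval w p| * Real.exp (-tiltedQuadratic b w)) (cocompact (σ → ℝ)) (𝓝 0) := by
  obtain ⟨a, -, ha⟩ := exists_forall_abs_eval_le_exp p
  set B := ∑ t, |b t|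
  have hexponent : Tendsto (fun x : ℝ => a + x * (a + B - x / 2)) atTop atBot :=
    tendsto_atBot_add_const_left _ _ (tendsto_id.atTop_mul_atBot₀
      (tendsto_atBot_add_const_left _ _ (tendsto_neg_atTop_atBot.comp
        (tendsto_id.atTop_div_const two_pos))))
  refine squeeze_zero (fun w => by positivity) (fun w => ?_)
    (Real.tendsto_exp_atBot.comp (hexponent.comp (tendsto_norm_cocompact_atTop (E := σ → ℝ))))
  calc |eval w p| * Real.exp (-tiltedQuadratic b w)
      ≤ Real.exp (a * (1 + ‖w‖)) * Real.exp (-(‖w‖ ^ 2 / 2 - B * ‖w‖)) := by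
        gcongr
        · exact ha w
        · exact le_tiltedQuadratic b w
    _ = Real.exp (a + ‖w‖ * (a + B - ‖w‖ / 2)) := by rw [← Real.exp_add]; ring_nf

lemma exists_isMaxOn_abs_eval_mul_exp_neg_tiltedQuadratic (p : MvPolynomial σ ℝ) (b : σ → ℝ)
    {S : Set (σ → ℝ)} (hS : IsClosed S) {w₀ : σ → ℝ} (hw₀ : w₀ ∈ S) (hp : eval w₀ p ≠ 0) :
    ∃ c ∈ S, eval c p ≠ 0 ∧
      IsMaxOn (fun w => |eval w p| * Real.exp (-tiltedQuadratic b w)) S c := by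
  have hcont : Continuous fun w => |eval w p| * Real.exp (-tiltedQuadratic b w) := by
    have := MvPolynomial.continuous_eval p
    unfold tiltedQuadratic
    fun_prop
  have hpos : 0 < |eval w₀ p| * Real.exp (-tiltedQuadratic b w₀) := by positivity
  obtain ⟨c, hcS, hc⟩ := hcont.continuousOn.exists_isMaxOn' hS hw₀
    (((tendsto_abs_eval_mul_exp_neg_tiltedQuadratic p b).eventually_le_const hpos).filter_mono
      inf_le_left)
  refine ⟨c, hcS, fun hzero => (hpos.trans_le (hc hw₀)).ne' ?_, hc⟩
  simp only [hzero, abs_zero, zero_mul]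

lemma logGradient_eq_of_isLocalMax [Fintype J] {q : J → MvPolynomial σ ℝ} {b c : σ → ℝ}
    (hc : ∀ j, eval c (q j) ≠ 0)
    (hmax : IsLocalMax (fun w => |eval w (∏ j, q j)| * Real.exp (-tiltedQuadratic b w)) c) :
    logGradient q c = b := by
  classical
  have hlog {w : σ → ℝ} (hw : ∀ j, eval w (q j) ≠ 0) :
      Real.log (|eval w (∏ j, q j)| * Real.exp (-tiltedQuadratic b w)) =
        ∑ j, Real.log (eval w (q j)) - tiltedQuadratic b w := by
    have hprod : ∏ j, eval w (q j) ≠ 0 := Finset.prod_ne_zero_iff.2 fun j _ => hw j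
    rw [map_prod, Real.log_mul (abs_ne_zero.2 hprod) (Real.exp_ne_zero _), Real.log_exp,
      Real.log_abs, Real.log_prod fun j _ => hw j, sub_eq_add_neg]
  have hne : ∀ᶠ w in 𝓝 c, ∀ j, eval w (q j) ≠ 0 := eventually_all.2 fun j =>
    (MvPolynomial.continuous_eval (q j)).continuousAt.eventually_ne (hc j)
  have hlogmax : IsLocalMax
      (fun w => ∑ j, Real.log (eval w (q j)) - tiltedQuadratic b w) c := by
    filter_upwards [hne, hmax] with w hw hwc
    rw [← hlog hw, ← hlog hc]
    refine Real.log_le_log (mul_pos (abs_pos.2 ?_) (Real.exp_pos _)) hwc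
    rw [map_prod]
    exact Finset.prod_ne_zero_iff.2 fun j _ => hw j
  have hcrit := hlogmax.hasFDerivAt_eq_zero ((HasFDerivAt.fun_sum fun j _ =>
    (hasFDerivAt_eval (q j) c).log (hc j)).sub (hasFDerivAt_tiltedQuadratic b c))
  funext t
  have ht : ∑ j, (eval c (q j))⁻¹ * eval c (pderiv t (q j)) - (c t + b t) = 0 := by
    simpa [differentialAt_single, Pi.single_apply] using
      DFunLike.congr_fun hcrit (Pi.single t 1)
  rw [logGradient]
  linarith

end CriticalPoints

section GenericCriticalPoints

open Filter Topology

lemma exists_logGradient_eq {σ J : Type*} [Finite σ] [Fintype J] (q : J → MvPolynomial σ ℝ)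
    (b : σ → ℝ) {w₀ : σ → ℝ} (hw₀ : ∀ j, eval w₀ (q j) ≠ 0) :
    ∃ c, (∀ j, 0 < eval w₀ (q j) * eval c (q j)) ∧ logGradient q c = b := by
  have := Fintype.ofFinite σ
  have hprod (w : σ → ℝ) : eval w (∏ j, q j) ≠ 0 ↔ ∀ j, eval w (q j) ≠ 0 := by
    simp [map_prod, Finset.prod_ne_zero_iff]
  have hcont (j : J) : Continuous fun w => eval w₀ (q j) * eval w (q j) :=
    continuous_const.mul (MvPolynomial.continuous_eval (q j))
  have hclosed : IsClosed {w | ∀ j, 0 ≤ eval w₀ (q j) * eval w (q j)} := by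
    simp only [Set.ofPred_forall]
    exact isClosed_iInter fun j => isClosed_le continuous_const (hcont j)
  obtain ⟨c, hc, hc_ne, hmax⟩ := exists_isMaxOn_abs_eval_mul_exp_neg_tiltedQuadratic (∏ j, q j) b
    hclosed (fun j => mul_self_nonneg (eval w₀ (q j))) ((hprod w₀).2 hw₀)
  rw [hprod] at hc_ne
  have hpos (j : J) : 0 < eval w₀ (q j) * eval c (q j) :=
    (hc j).lt_of_ne' (mul_ne_zero (hw₀ j) (hc_ne j))
  refine ⟨c, hpos, logGradient_eq_of_isLocalMax hc_ne (hmax.isLocalMax ?_)⟩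
  have hev : ∀ᶠ w in 𝓝 c, ∀ j, 0 < eval w₀ (q j) * eval w (q j) :=
    eventually_all.2 fun j => (hcont j).continuousAt.eventually_const_lt (hpos j)
  exact hev.mono fun w hw j => (hw j).le

/-- Sard's theorem in equal finite dimensions. -/
lemma exists_forall_injective_of_hasFDerivAt {E : Type*} [NormedAddCommGroup E] [NormedSpace ℝ E]
    [FiniteDimensional ℝ E] {f : E → E} {f' : E → E →L[ℝ] E} {s : Set E}
    (hf : ∀ x ∈ s, HasFDerivAt f (f' x) x) :
    ∃ y, ∀ x ∈ s, f x = y → Function.Injective (f' x) := by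
  borelize E
  have hnull : MeasureTheory.Measure.addHaar (f '' {x ∈ s | (f' x).det = 0}) = 0 :=
    MeasureTheory.addHaar_image_eq_zero_of_det_fderivWithin_eq_zero _
      (fun x hx => (hf x hx.1).hasFDerivWithinAt) fun x hx => hx.2
  obtain ⟨y, hy⟩ : ∃ y, y ∉ f '' {x ∈ s | (f' x).det = 0} := by
    by_contra! hall
    rw [Set.eq_univ_of_forall hall] at hnull
    exact (isOpen_univ.measure_pos _ Set.univ_nonempty).ne' hnull
  refine ⟨y, fun x hx hxy => ?_⟩
  have hdet : (f' x).det ≠ 0 := fun h => hy ⟨x, ⟨hx, h⟩, hxy⟩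
  exact (LinearMap.equivOfDetNeZero (f' x : E →ₗ[ℝ] E) hdet).injective

end GenericCriticalPoints

section CriticalSystem

variable {𝕜 σ ι J : Type*} [Field 𝕜]

/-- The block map of a system enlarged by one extra block, `none`, made of the variables `J`. -/
def extendBlock (J : Type*) (π : σ → ι) : σ ⊕ J → Option ι :=
  Sum.elim (fun s => some (π s)) fun _ => none

lemma blockSize_extendBlock_none (π : σ → ι) :
    blockSize (extendBlock J π) none = Nat.card J := by
  let e : {j : σ ⊕ J // extendBlock J π j = none} ≃ J :=
    { toFun
        | ⟨Sum.inr j, _⟩ => j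
      invFun j := ⟨Sum.inr j, rfl⟩
      left_inv
        | ⟨Sum.inr j, _⟩ => rfl
      right_inv j := rfl }
  exact Nat.card_congr e

lemma blockSize_extendBlock_some (π : σ → ι) (i : ι) :
    blockSize (extendBlock J π) (some i) = blockSize π i := by
  let e : {s : σ ⊕ J // extendBlock J π s = some i} ≃ {s // π s = i} :=
    { toFun
        | ⟨Sum.inl s, h⟩ => ⟨s, Option.some_injective _ h⟩
      invFun s := ⟨Sum.inl s.1, congrArg some s.2⟩
      left_inv
        | ⟨Sum.inl s, _⟩ => rfl
      right_inv j := rfl }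
  exact Nat.card_congr e

lemma rename_inl_mem_blockDegreeLE {π : σ → ι} {M : ι → ℕ} {p : MvPolynomial σ 𝕜}
    (hp : p ∈ blockDegreeLE 𝕜 π M) :
    rename Sum.inl p ∈ blockDegreeLE 𝕜 (extendBlock J π) fun o => o.elim 0 M := by
  classical
  simp only [mem_blockDegreeLE, support_rename_of_injective Sum.inl_injective,
    Finset.forall_mem_image]
  intro m hm
  have hcomp : (m.mapDomain Sum.inl).mapDomain (extendBlock J π) =
      (m.mapDomain π).mapDomain some := by
    rw [← Finsupp.mapDomain_comp, ← Finsupp.mapDomain_comp]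
    rfl
  rintro (_ | i)
  · simp [hcomp, Finsupp.mapDomain_of_notMem_range]
  · simpa [hcomp, Finsupp.mapDomain_apply (Option.some_injective ι)] using hp hm i

variable [Fintype J]

/-- The equations `logGradient q w = b` with denominators cleared: the variables `Sum.inl t` are the
coordinates of `w`, and `Sum.inr j` stands for the inverse of `q j`. -/
noncomputable def criticalSystem (q : J → MvPolynomial σ 𝕜) (b : σ → 𝕜) :
    σ ⊕ J → MvPolynomial (σ ⊕ J) 𝕜 :=
  Sum.elim
    (fun t => ∑ j, X (Sum.inr j) * rename Sum.inl (pderiv t (q j)) - X (Sum.inl t) - C (b t))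
    (fun j => X (Sum.inr j) * rename Sum.inl (q j) - 1)

lemma criticalSystem_mem_blockDegreeLE {π : σ → ι} {d : ι → ℕ} (hd : ∀ i, 1 ≤ d i)
    {q : J → MvPolynomial σ 𝕜} (hq : ∀ j, q j ∈ blockDegreeLE 𝕜 π d) (b : σ → 𝕜) (s : σ ⊕ J) :
    criticalSystem q b s ∈ blockDegreeLE 𝕜 (extendBlock J π) fun o => o.elim 1 d := by
  classical
  have hmul {p : MvPolynomial σ 𝕜} (hp : p ∈ blockDegreeLE 𝕜 π d) (j : J) :
      X (Sum.inr j) * rename Sum.inl p ∈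
        blockDegreeLE 𝕜 (extendBlock J π) fun o => o.elim 1 d := by
    refine blockDegreeLE_mono ?_
      (mul_mem_blockDegreeLE (X_mem_blockDegreeLE _) (rename_inl_mem_blockDegreeLE hp))
    rintro (_ | i) <;> simp [extendBlock]
  obtain t | j := s
  · refine sub_mem (sub_mem (sum_mem fun j _ => hmul (pderiv_mem_blockDegreeLE (hq j) t) j) ?_)
      (C_mem_blockDegreeLE _ _ _)
    refine blockDegreeLE_mono (Pi.le_def.2 fun o => ?_) (X_mem_blockDegreeLE _)
    by_cases ho : o = some (π t)
    · subst ho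
      simpa [extendBlock] using hd (π t)
    · simp [extendBlock, ho]
  · exact sub_mem (hmul (hq j) j) (one_mem_blockDegreeLE _ _)

/-- The point of the space of variables of `criticalSystem q b` that lies over `w`. -/
noncomputable def criticalLift (q : J → MvPolynomial σ 𝕜) (w : σ → 𝕜) : σ ⊕ J → 𝕜 :=
  Sum.elim w fun j => (eval w (q j))⁻¹

lemma differentialAt_criticalLift [Fintype σ] (q : J → MvPolynomial σ 𝕜) (w : σ → 𝕜)
    (u : σ ⊕ J → 𝕜) (j : J) (p : MvPolynomial σ 𝕜) :
    differentialAt (criticalLift q w) (X (Sum.inr j) * rename Sum.inl p) u =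
      (eval w (q j))⁻¹ * differentialAt w p (u ∘ Sum.inl) + eval w p * u (Sum.inr j) := by
  simp [differentialAt_mul, differentialAt_rename, eval_rename, criticalLift]

lemma isNondegenerateZero_criticalSystem [Fintype σ] {q : J → MvPolynomial σ 𝕜} {b c : σ → 𝕜}
    (hc : ∀ j, eval c (q j) ≠ 0) (hgrad : logGradient q c = b)
    (hhess : Function.Injective (logHessian q c)) :
    IsNondegenerateZero (criticalSystem q b) (criticalLift q c) where
  eval_eq_zero := by
    rintro (t | j)
    · simp [criticalSystem, criticalLift, eval_rename, ← hgrad, logGradient]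
    · simp [criticalSystem, criticalLift, eval_rename, hc j]
  injective := by
    refine (injective_iff_map_eq_zero _).2 fun u hu => ?_
    have hinr (j : J) : u (Sum.inr j) =
        -(eval c (q j) ^ 2)⁻¹ * differentialAt c (q j) (u ∘ Sum.inl) := by
      have hj : (eval c (q j))⁻¹ * differentialAt c (q j) (u ∘ Sum.inl) +
          eval c (q j) * u (Sum.inr j) = 0 := by
        simpa [criticalSystem, ← C_1, -map_one, differentialAt_criticalLift]
          using congrFun hu (Sum.inr j)
      have := hc j
      field_simp at hj ⊢
      linear_combination hj
    have hinl : u ∘ Sum.inl = 0 := by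
      refine (injective_iff_map_eq_zero _).1 hhess _ (funext fun t => ?_)
      refine Eq.trans ?_ (congrFun hu (Sum.inl t))
      simp [criticalSystem, logHessian, differentialAt_criticalLift, hinr, sub_eq_add_neg,
        Finset.sum_add_distrib, mul_assoc, mul_left_comm]
    funext s
    obtain t | j := s
    · exact congrFun hinl t
    · rw [hinr, hinl, map_zero, mul_zero, Pi.zero_apply]

end CriticalSystem

section SignPatterns

open scoped Nat

variable {σ ι J : Type*} [Fintype σ] [Fintype ι] [Fintype J]

lemma card_mul_factorial_le_of_pairwise_eval_mul_neg {α : Type*} [Fintype α] {π : σ → ι}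
    {d : ι → ℕ} (hd : ∀ i, 1 ≤ d i) {q : J → MvPolynomial σ ℝ}
    (hq : ∀ j, q j ∈ blockDegreeLE ℝ π d) {w : α → σ → ℝ} (hw : ∀ a j, eval (w a) (q j) ≠ 0)
    (hsep : Pairwise fun a a' => ∃ j, eval (w a) (q j) * eval (w a') (q j) < 0) :
    Fintype.card α * ((Fintype.card J)! * ∏ i, (blockSize π i)!) ≤
      (Fintype.card σ + Fintype.card J)! * ∏ i, d i ^ blockSize π i := by
  obtain ⟨b, hb⟩ := exists_forall_injective_of_hasFDerivAt
    (s := {w | ∀ j, eval w (q j) ≠ 0}) fun w hw => hasFDerivAt_logGradient q hw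
  choose c hc_pos hc_grad using fun a => exists_logGradient_eq q b (hw a)
  have hc_ne (a : α) (j : J) : eval (c a) (q j) ≠ 0 := right_ne_zero_of_mul (hc_pos a j).ne'
  have hinj : Function.Injective fun a => criticalLift q (c a) := by
    intro a a' h
    by_contra hne
    obtain ⟨j, hj⟩ := hsep hne
    have hcc : c a = c a' := funext fun t => congrFun h (Sum.inl t)
    have hj' := hc_pos a' j
    rw [← hcc] at hj'
    nlinarith [mul_pos (hc_pos a j) hj', mul_self_pos.2 (hc_ne a j)]
  have hbezout := card_mul_prod_factorial_le_of_isNondegenerateZero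
    (criticalSystem_mem_blockDegreeLE hd hq b) hinj fun a =>
      isNondegenerateZero_criticalSystem (hc_ne a) (hc_grad a) (hb _ (hc_ne a) (hc_grad a))
  simpa [Fintype.prod_option, blockSize_extendBlock_none, blockSize_extendBlock_some]
    using hbezout

lemma exists_pos_forall_add_neg {α : Type*} [Finite α] (f : α → ℝ) :
    ∃ δ > 0, ∀ a, f a < 0 → f a + δ < 0 := by
  have hev : ∀ᶠ δ : ℝ in nhdsWithin 0 (Set.Ioi 0), ∀ a, f a < 0 → f a + δ < 0 := by
    refine Filter.eventually_all.2 fun a => Filter.eventually_imp_distrib_left.2 fun ha => ?_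
    filter_upwards [nhdsWithin_le_nhds (gt_mem_nhds (neg_pos.2 ha))] with δ hδ
    linarith
  obtain ⟨δ, hδ, hδ_pos⟩ := (hev.and self_mem_nhdsWithin).exists
  exact ⟨δ, hδ_pos, hδ⟩

lemma two_pow_card_mul_factorial_le_of_forall_eval_nonneg_iff {π : σ → ι} {d : ι → ℕ}
    (hd : ∀ i, 1 ≤ d i) {q : J → MvPolynomial σ ℝ} (hq : ∀ j, q j ∈ blockDegreeLE ℝ π d)
    (hq_shatter : ∀ T : Finset J, ∃ w, ∀ j, 0 ≤ eval w (q j) ↔ j ∈ T) :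
    2 ^ Fintype.card J * ((Fintype.card J)! * ∏ i, (blockSize π i)!) ≤
      (Fintype.card σ + Fintype.card J)! * ∏ i, d i ^ blockSize π i := by
  choose w hw using hq_shatter
  obtain ⟨δ, hδ_pos, hδ⟩ :=
    exists_pos_forall_add_neg fun a : Finset J × J => eval (w a.1) (q a.2)
  have hpos {T : Finset J} {j : J} (hj : j ∈ T) : 0 < eval (w T) (q j + C δ) := by
    simpa using add_pos_of_nonneg_of_pos ((hw T j).2 hj) hδ_pos
  have hneg {T : Finset J} {j : J} (hj : j ∉ T) : eval (w T) (q j + C δ) < 0 := by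
    simpa using hδ (T, j) (not_le.1 ((hw T j).not.2 hj))
  have hcount := card_mul_factorial_le_of_pairwise_eval_mul_neg (α := Finset J) hd
    (fun j => add_mem (hq j) (C_mem_blockDegreeLE π d δ)) (w := w)
    (fun T j => ?_) fun T T' hne => ?_
  · rwa [Fintype.card_finset] at hcount
  · by_cases hj : j ∈ T
    · exact (hpos hj).ne'
    · exact (hneg hj).ne
  · obtain ⟨j, hj⟩ : ∃ j, ¬(j ∈ T ↔ j ∈ T') := by
      by_contra! h
      exact hne (Finset.ext h)
    refine ⟨j, ?_⟩
    by_cases hjT : j ∈ T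
    · exact mul_neg_of_pos_of_neg (hpos hjT) (hneg (by tauto))
    · exact mul_neg_of_neg_of_pos (hneg hjT) (hpos (by tauto))

end SignPatterns

section Entropy

open scoped Nat

variable {ι : Type*} [Fintype ι] {n K : ℕ} {κ : ι → ℕ}

lemma multinomial_mul_prod_pow_le {x : ι → ℝ} (hx : ∀ i, 0 ≤ x i) (κ : ι → ℕ) :
    Nat.multinomial Finset.univ κ * ∏ i, x i ^ κ i ≤ (∑ i, x i) ^ ∑ i, κ i := by
  classical
  rw [Finset.sum_pow_eq_sum_piAntidiag]
  refine Finset.single_le_sum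
    (f := fun κ : ι → ℕ => (Nat.multinomial Finset.univ κ : ℝ) * ∏ i, x i ^ κ i)
    (fun κ' _ => ?_) ?_
  · exact mul_nonneg (Nat.cast_nonneg _) (Finset.prod_nonneg fun i _ => pow_nonneg (hx i) _)
  · simp

/-- A single term of the expansion of `(1 + ∑ i, ε κ i / K) ^ (K + n)`. -/
lemma factorial_mul_prod_pow_le (n : ℕ) (hK : ∑ i, κ i = K) {ε : ℝ} (hε : 0 ≤ ε) :
    (K + n)! * (ε ^ K * ∏ i, ((κ i : ℝ) / K) ^ κ i) ≤
      n ! * (∏ i, ((κ i)! : ℝ)) * (1 + ε) ^ (K + n) := by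
  let κ' : Option ι → ℕ := fun o => o.elim n κ
  let x : Option ι → ℝ := fun o => o.elim 1 fun i => ε * (κ i / K)
  have hx (o : Option ι) : 0 ≤ x o := by
    obtain _ | i := o
    · exact zero_le_one
    · exact mul_nonneg hε (by positivity)
  have hsum_κ' : ∑ o, κ' o = K + n := by simp [κ', Fintype.sum_option, hK, add_comm]
  have hsum_x : ∑ o, x o ≤ 1 + ε := by
    simp only [x, Fintype.sum_option, Option.elim, ← Finset.mul_sum, ← Finset.sum_div,
      ← Nat.cast_sum, hK]
    gcongr
    exact mul_le_of_le_one_right hε (div_self_le_one _)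
  have hfactorial : (n ! * ∏ i, (κ i)!) * Nat.multinomial Finset.univ κ' = (K + n)! := by
    simpa [hsum_κ', Fintype.prod_option, κ'] using Nat.multinomial_spec Finset.univ κ'
  have hprod : ∏ o, x o ^ κ' o = ε ^ K * ∏ i, ((κ i : ℝ) / K) ^ κ i := by
    simp [x, κ', Fintype.prod_option, mul_pow, Finset.prod_mul_distrib, Finset.prod_pow_eq_pow_sum,
      hK]
  calc ((K + n)! : ℝ) * (ε ^ K * ∏ i, ((κ i : ℝ) / K) ^ κ i)
      = n ! * (∏ i, ((κ i)! : ℝ)) * (Nat.multinomial Finset.univ κ' * ∏ o, x o ^ κ' o) := by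
        rw [← hfactorial, hprod]; push_cast; ring
    _ ≤ n ! * (∏ i, ((κ i)! : ℝ)) * (∑ o, x o) ^ (K + n) := by
        rw [← hsum_κ']
        gcongr
        exact multinomial_mul_prod_pow_le hx κ'
    _ ≤ n ! * (∏ i, ((κ i)! : ℝ)) * (1 + ε) ^ (K + n) := by
        gcongr
        exact Finset.sum_nonneg fun o _ => hx o

lemma prod_div_pow_mul_prod_div_pow (hK : ∑ i, κ i = K) (d : ι → ℝ) :
    (∏ i, ((κ i : ℝ) / K) ^ κ i) * ∏ i, (K * d i / κ i) ^ κ i = ∏ i, d i ^ κ i := by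
  rw [← Finset.prod_mul_distrib]
  refine Finset.prod_congr rfl fun i hi => ?_
  obtain hκ | hκ := (κ i).eq_zero_or_pos
  · simp [hκ]
  have hK_pos : 0 < K := hK ▸ hκ.trans_le (Finset.single_le_sum_of_canonicallyOrdered hi)
  rw [← mul_pow]
  field_simp

/-- The multinomial expansion is used with `ε = √2 - 1`, for which `(1 + ε) ^ n` absorbs half of
the factor `2 ^ n`. -/
lemma sqrt_two_pow_le_of_two_pow_mul_factorial_le {d : ι → ℕ} (hK : ∑ i, κ i = K)
    (h : 2 ^ n * (n ! * ∏ i, (κ i)!) ≤ (K + n)! * ∏ i, d i ^ κ i) :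
    √2 ^ n ≤ (2 + √2) ^ K * ∏ i, ((K : ℝ) * d i / κ i) ^ κ i := by
  set P := ∏ i, ((κ i : ℝ) / K) ^ κ i
  set Q := ∏ i, ((K : ℝ) * d i / κ i) ^ κ i
  set F : ℝ := n ! * ∏ i, ((κ i)! : ℝ) with hF
  have hε : 0 < √2 - 1 := sub_pos.2 (Real.lt_sqrt_of_sq_lt (by norm_num))
  have hratio : √2 = (2 + √2) * (√2 - 1) := by ring_nf; norm_num
  have hweights : (K + n)! * ((√2 - 1) ^ K * P) ≤ F * √2 ^ (K + n) := by
    have hterm := factorial_mul_prod_pow_le n hK hε.le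
    rwa [add_sub_cancel] at hterm
  have hcount : (√2 ^ n * √2 ^ n) * F ≤ (K + n)! * (P * Q) := by
    rw [prod_div_pow_mul_prod_div_pow hK, ← mul_pow, Real.mul_self_sqrt zero_le_two, hF]
    exact_mod_cast h
  refine le_of_mul_le_mul_left ?_ (show 0 < F * √2 ^ n * (√2 - 1) ^ K by positivity)
  calc F * √2 ^ n * (√2 - 1) ^ K * √2 ^ n
      = ((√2 ^ n * √2 ^ n) * F) * (√2 - 1) ^ K := by ring
    _ ≤ ((K + n)! * (P * Q)) * (√2 - 1) ^ K := by gcongr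
    _ = ((K + n)! * ((√2 - 1) ^ K * P)) * Q := by ring
    _ ≤ (F * √2 ^ (K + n)) * Q := by gcongr
    _ = F * √2 ^ n * (((2 + √2) * (√2 - 1)) ^ K * Q) := by rw [← hratio]; ring
    _ = F * √2 ^ n * (√2 - 1) ^ K * ((2 + √2) ^ K * Q) := by rw [mul_pow]; ring

/-- The relative entropy `H(v|u)` of `v` with respect to `u`, in bits. -/
noncomputable def binaryRelEntropy (v u : ι → ℝ) : ℝ :=
  ∑ i, v i * Real.logb 2 (v i / u i)

lemma mul_logb_sub_binaryRelEntropy (hK : ∑ i, κ i = K) {d : ι → ℝ} (hd : ∀ i, 0 < d i) {a : ℝ}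
    (ha : a ≠ 0) :
    K * (Real.logb 2 (a * ∑ i, d i) -
        binaryRelEntropy (fun i => (κ i : ℝ) / K) fun i => d i / ∑ i, d i) =
      K * Real.logb 2 a + ∑ i, κ i * Real.logb 2 (K * d i / κ i) := by
  have hK_sum (x : ℝ) : K * x = ∑ i, κ i * x := by rw [← hK, Nat.cast_sum, Finset.sum_mul]
  rw [mul_sub, hK_sum, hK_sum (Real.logb 2 a), binaryRelEntropy, Finset.mul_sum _ _ (K : ℝ),
    ← Finset.sum_sub_distrib, ← Finset.sum_add_distrib]
  refine Finset.sum_congr rfl fun i hi => ?_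
  obtain hκ | hκ := (κ i).eq_zero_or_pos
  · simp [hκ]
  have hK_pos : 0 < K := hK ▸ hκ.trans_le (Finset.single_le_sum_of_canonicallyOrdered hi)
  have hD_pos : 0 < ∑ i, d i := Finset.sum_pos (fun i _ => hd i) ⟨i, hi⟩
  have hdi := hd i
  rw [← mul_assoc, mul_div_cancel₀ _ (by positivity), ← mul_sub, ← mul_add,
    ← Real.logb_div (by positivity) (by positivity), ← Real.logb_mul ha (by positivity)]
  congr 2
  field_simp

lemma natCast_le_of_two_pow_mul_factorial_le {d : ι → ℕ} (hd : ∀ i, 1 ≤ d i) (hK : ∑ i, κ i = K)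
    (h : 2 ^ n * (n ! * ∏ i, (κ i)!) ≤ (K + n)! * ∏ i, d i ^ κ i) :
    (n : ℝ) ≤ 2 * K * (Real.logb 2 ((2 + √2) * ∑ i, (d i : ℝ)) -
      binaryRelEntropy (fun i => (κ i : ℝ) / K) fun i => d i / ∑ i, (d i : ℝ)) := by
  have hd_pos (i : ι) : (0 : ℝ) < d i := Nat.cast_pos.2 (hd i)
  have hfactor (i : ι) : 0 < ((K : ℝ) * d i / κ i) ^ κ i := by
    obtain hκ | hκ := (κ i).eq_zero_or_pos
    · simp [hκ]
    have hK_pos : 0 < K :=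
      hK ▸ hκ.trans_le (Finset.single_le_sum_of_canonicallyOrdered (Finset.mem_univ i))
    have hdi := hd_pos i
    positivity
  have hlog := Real.logb_le_logb_of_le one_lt_two (by positivity)
    (sqrt_two_pow_le_of_two_pow_mul_factorial_le hK h)
  rw [Real.logb_mul (by positivity) (Finset.prod_pos fun i _ => hfactor i).ne',
    Real.logb_prod _ _ fun i _ => (hfactor i).ne'] at hlog
  simp only [Real.logb_pow] at hlog
  have hsqrt : Real.logb 2 √2 = 1 / 2 := by
    rw [Real.sqrt_eq_rpow, Real.logb_rpow two_pos (by norm_num)]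
  rw [hsqrt, ← mul_logb_sub_binaryRelEntropy hK hd_pos (by positivity)] at hlog
  linarith

end Entropy

section Specialize

variable {R σ τ ι : Type*} [CommSemiring R]

/-- The polynomial in the variables `σ` obtained by substituting the point `x` for the
variables `τ`. -/
noncomputable def specialize (x : τ → R) : MvPolynomial (σ ⊕ τ) R →ₐ[R] MvPolynomial σ R :=
  aeval (Sum.elim X fun j => C (x j))

lemma eval_specialize (w : σ → R) (x : τ → R) (y : MvPolynomial (σ ⊕ τ) R) :
    eval w (specialize x y) = eval (Sum.elim w x) y := by
  induction y using MvPolynomial.induction_on with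
  | C a => simp [specialize]
  | add p p' h h' => simp only [map_add, h, h']
  | mul_X p i h =>
    rw [map_mul, map_mul, map_mul, h, eval_X]
    obtain s | j := i <;> simp [specialize]

lemma specialize_mem_blockDegreeLE [Fintype σ] [Finite τ] [DecidableEq ι] {π : σ → ι} {M : ι → ℕ}
    {y : MvPolynomial (σ ⊕ τ) R}
    (hy : ∀ m ∈ y.support, ∀ i, ∑ s : {s // π s = i}, m (Sum.inl s) ≤ M i) (x : τ → R) :
    specialize x y ∈ blockDegreeLE R π M := by
  have := Fintype.ofFinite τ
  let δ : σ ⊕ τ → ι → ℕ := Sum.elim (fun s => Pi.single (π s) 1) 0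
  refine aeval_mem_blockDegreeLE (δ := δ) ?_ fun m hm i => ?_
  · rintro (s | j)
    · exact X_mem_blockDegreeLE s
    · exact C_mem_blockDegreeLE π 0 (x j)
  · refine le_trans (le_of_eq ?_) (hy m hm i)
    rw [← Finset.sum_subtype ({s | π s = i} : Finset σ) (by simp) fun s => m (Sum.inl s)]
    simp [Finsupp.sum_fintype, δ, Pi.single_apply, Finset.sum_filter, eq_comm]

end Specialize

theorem improved_vc_bound_polynomial_networks_general {σ ι 𝓧 : Type*} [Fintype σ] [Fintype ι]
    (π : σ → ι) {d : ι → ℕ} (hd : ∀ i, 1 ≤ d i) {y : 𝓧 → MvPolynomial σ ℝ}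
    (hy : ∀ x, y x ∈ blockDegreeLE ℝ π d) {S : Finset 𝓧}
    (hS : ∀ T ⊆ S, ∃ w : σ → ℝ, (↑S : Set 𝓧) ∩ {x | 0 ≤ eval w (y x)} = ↑T) :
    (S.card : ℝ) ≤ 2 * Fintype.card σ * (Real.logb 2 ((2 + √2) * ∑ i, (d i : ℝ)) -
      binaryRelEntropy (fun i => (blockSize π i : ℝ) / Fintype.card σ)
        fun i => d i / ∑ i, (d i : ℝ)) := by
  refine natCast_le_of_two_pow_mul_factorial_le hd (sum_blockSize π) ?_
  rw [← Fintype.card_coe]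
  refine two_pow_card_mul_factorial_le_of_forall_eval_nonneg_iff hd (fun x : S => hy x) fun T => ?_
  obtain ⟨w, hw⟩ := hS (T.map (Function.Embedding.subtype _)) (Finset.map_subtype_subset T)
  exact ⟨w, fun x => by simpa using Set.ext_iff.1 hw x⟩

/-- improved VC bound: with the weight variables partitioned into `l`
blocks of sizes `kᵢ ≥ 2` (`k = Σ kᵢ`), `y(w,x)` a polynomial each of whose monomials has
total degree at most `dᵢ` in the block-`i` weights (`d = Σ dᵢ`), `A_w = {x : y(w,x) ≥ 0}`,
and `H(v|u) = Σᵢ (kᵢ/k)·lg(d·kᵢ/(k·dᵢ))`, every finite subset of `ℝ^N` shattered by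
`𝓐 = {A_w}` has cardinality at most `2k·(lg(4ed) − H(v|u))`. -/
theorem improved_vc_bound_polynomial_networks
    (l : ℕ) (hl : 1 ≤ l) (k : Fin l → ℕ) (hk : ∀ i, 2 ≤ k i)
    (d : Fin l → ℕ) (hd : ∀ i, 1 ≤ d i)
    (K : ℕ) (hK : K = ∑ i, k i)
    (D : ℕ) (hD : D = ∑ i, d i)
    (H : ℝ) (hH : H = ∑ i, ((k i : ℝ) / K) * Real.logb 2 ((D * k i : ℝ) / (K * d i)))
    (N : ℕ)
    (y : MvPolynomial (((i : Fin l) × Fin (k i)) ⊕ Fin N) ℝ)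
    (hdeg : ∀ m ∈ y.support, ∀ i : Fin l,
      ∑ t : Fin (k i), m (Sum.inl ⟨i, t⟩) ≤ d i) :
    ∀ S : Finset (Fin N → ℝ),
      (∀ T ⊆ S, ∃ w : ((i : Fin l) × Fin (k i)) → ℝ,
        (↑S : Set (Fin N → ℝ)) ∩
          {x | 0 ≤ MvPolynomial.eval (Sum.elim w x) y} = ↑T) →
      (S.card : ℝ) ≤ 2 * K * (Real.logb 2 (4 * Real.exp 1 * D) - H) := by
  intro S hS
  have hmem (x : Fin N → ℝ) : specialize x y ∈ blockDegreeLE ℝ Sigma.fst d :=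
    specialize_mem_blockDegreeLE (fun m hm i =>
      ((Equiv.sigmaSubtype i).symm.sum_comp fun s => m (Sum.inl s.1)).symm.trans_le
        (hdeg m hm i)) x
  have hbound := improved_vc_bound_polynomial_networks_general Sigma.fst hd hmem
    (by simpa only [eval_specialize] using hS)
  have hcard : Fintype.card ((i : Fin l) × Fin (k i)) = K := by simp [hK]
  have hD_cast : ∑ i, (d i : ℝ) = D := by rw [hD, Nat.cast_sum]
  have hH' : H = binaryRelEntropy (fun i => (k i : ℝ) / K) fun i => d i / (D : ℝ) := by
    simp only [hH, binaryRelEntropy, div_div_div_eq, mul_comm (D : ℝ)]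
  simp only [blockSize_sigma_fst, hcard, hD_cast, ← hH'] at hbound
  have hD_pos : 0 < D := hD ▸ Finset.sum_pos (fun i _ => hd i) ⟨⟨0, hl⟩, Finset.mem_univ _⟩
  have hconst : 2 + √2 ≤ 4 * Real.exp 1 := by
    linarith [Real.add_one_le_exp 1, Real.sqrt_lt_self_iff.2 (one_lt_two (α := ℝ))]
  refine hbound.trans ?_
  gcongr
  exact one_lt_two
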